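/- arXiv:1105.4119 — 3 statements merged into one kernel-verified Lean document; each statement's English description precedes it below -/
import Mathlib

section
/- Let X be a random variable with E|X|³ < ∞ having an absolutely continuous distribution with density p, characteristic function f, and let Z be standard normal. For a real parameter α define g_α(t) = e^{−t²/2}·(1 + α·(it)³/3!), which is the Fourier transform of φ_α(x) = φ(x)·(1 + α·(x³ − 3x)/3!), where φ is the standard normal density. Then for every real α, D(X‖Z) ≤ α² + 4·(‖f − g_α‖₂ + ‖f′′′ − g_α′′′‖₂), where ‖u‖₂ is the L²-norm on the real line. -/
open MeasureTheory
open scoped ENNReal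

/-- The standard normal density `φ(x) = (2π)^{-1/2} e^{-x²/2}`. -/
noncomputable def stdNormalPDF (x : ℝ) : ℝ :=
  (Real.sqrt (2 * Real.pi))⁻¹ * Real.exp (-x ^ 2 / 2)

/-- `p` is a probability density on the real line. -/
def IsProbDensity (p : ℝ → ℝ) : Prop :=
  Measurable p ∧ (∀ x, 0 ≤ p x) ∧ (∫ x, p x = 1)

/-- The characteristic function `f(t) = ∫ e^{itx} p(x) dx`. -/
noncomputable def charFn (p : ℝ → ℝ) (t : ℝ) : ℂ :=
  ∫ x : ℝ, Complex.exp (Complex.I * t * x) * (p x : ℂ)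

/-- The Edgeworth-corrected normal characteristic function
`g_α(t) = e^{-t²/2}·(1 + α·(it)³/3!)`, the Fourier transform of
`φ_α(x) = φ(x)(1 + α(x³-3x)/3!)`. -/
noncomputable def gAlpha (α : ℝ) (t : ℝ) : ℂ :=
  Complex.exp (-(t : ℂ) ^ 2 / 2) * (1 + (α : ℂ) * (Complex.I * t) ^ 3 / 6)

open FourierTransform in
theorem plancherel_aux (v : ℝ → ℂ) (hv : Integrable v) (hF : MemLp (𝓕 v) 2 volume) :
    eLpNorm v 2 volume = eLpNorm (𝓕 v) 2 volume := by
  set W : Lp ℂ 2 (volume : Measure ℝ) := hF.toLp with hW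
  set w : Lp ℂ 2 (volume : Measure ℝ) := 𝓕⁻ W with hw
  have hFw : 𝓕 w = W := FourierTransform.fourier_fourierInv_eq W
  have key : ∀ᵐ x, v x = w x := by
    apply ae_eq_of_integral_contDiff_smul_eq hv.locallyIntegrable
      ((Lp.memLp w).locallyIntegrable (by norm_num))
    intro g hg hgs
    have hg1 : ContDiff ℝ (⊤ : ℕ∞) (fun x => (g x : ℂ)) := by
      exact Complex.ofRealCLM.contDiff.comp hg
    have hg2 : HasCompactSupport (fun x => (g x : ℂ)) := HasCompactSupport.comp_left (g := Complex.ofReal) hgs Complex.ofReal_zero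
    set ψ : SchwartzMap ℝ ℂ := hg2.toSchwartzMap hg1 with hψ
    have hψx : ∀ x, ψ x = g x := fun x => rfl
    set χ : SchwartzMap ℝ ℂ := 𝓕⁻ ψ with hχ
    have hχψ : 𝓕 χ = ψ := FourierTransform.fourier_fourierInv_eq ψ
    have h1 : ∫ x, ψ x • v x = ∫ x, χ x • 𝓕 v x := by
      rw [← hχψ]
      have := VectorFourier.integral_fourierIntegral_smul_eq_flip (L := innerₗ ℝ) (μ := volume)
        (ν := volume) (f := χ) (g := v)
        Real.continuous_fourierChar continuous_inner χ.integrable hv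
      simpa using! this
    have h2 : ∫ x, ψ x • w x = ∫ x, χ x • 𝓕 v x := by
      have h3 := Lp.fourier_toTemperedDistribution_eq w
      have h4 := congrArg (fun T => T χ) h3
      simp only [TemperedDistribution.fourier_apply, hχψ, hFw] at h4
      rw [Lp.toTemperedDistribution_apply, Lp.toTemperedDistribution_apply] at h4
      rw [h4]
      apply integral_congr_ae
      filter_upwards [hF.coeFn_toLp] with x hx
      rw [← hx]
    have e1 : ∀ x, g x • v x = ψ x • v x := fun x => by rw [hψx]; simp
    have e2 : ∀ x, g x • w x = ψ x • w x := fun x => by rw [hψx]; simp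
    simp_rw [e1, e2, h1, h2]
  rw [eLpNorm_congr_ae key]
  have hn : ‖w‖ = ‖W‖ := by rw [← hFw, Lp.norm_fourier_eq]
  have : ‖w‖ₑ = ‖W‖ₑ := by
    rw [← ofReal_norm, ← ofReal_norm, hn]
  rw [Lp.enorm_def, Lp.enorm_def] at this
  rw [this]
  exact eLpNorm_congr_ae hF.coeFn_toLp

open FourierTransform in
theorem charFn_eq_fourier (q : ℝ → ℝ) (t : ℝ) :
    charFn q t = 𝓕 (fun x => (q x : ℂ)) (-(2 * Real.pi)⁻¹ * t) := by
  rw [Real.fourier_real_eq_integral_exp_smul]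
  unfold charFn
  congr 1; ext x
  rw [smul_eq_mul]
  congr 2
  push_cast
  have : (Real.pi : ℂ) ≠ 0 := by exact_mod_cast Real.pi_ne_zero
  field_simp

open FourierTransform in
theorem charFn_hasDeriv (q : ℝ → ℝ) (h0 : Integrable q) (h1 : Integrable (fun x => x * q x)) (t : ℝ) :
    HasDerivAt (charFn q) (Complex.I * charFn (fun x => x * q x) t) t := by
  have e : charFn q = fun t => 𝓕 (fun x => (q x : ℂ)) (-(2 * Real.pi)⁻¹ * t) :=
    funext (charFn_eq_fourier q)
  rw [e, charFn_eq_fourier]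
  have hd := Real.hasDerivAt_fourier (f := fun x => (q x : ℂ)) h0.ofReal
    (by simpa using h1.ofReal (𝕜 := ℂ)) (-(2 * Real.pi)⁻¹ * t)
  have := HasDerivAt.scomp t hd ((hasDerivAt_id t).const_mul (-(2 * Real.pi)⁻¹))
  refine this.congr_deriv ?_
  rw [Real.fourier_real_eq_integral_exp_smul, Real.fourier_real_eq_integral_exp_smul,
    ← integral_const_mul, ← integral_smul]
  congr 1; ext x
  have : (Real.pi : ℂ) ≠ 0 := by exact_mod_cast Real.pi_ne_zero
  simp only [smul_eq_mul, Complex.real_smul]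
  push_cast
  field_simp
  try ring

open FourierTransform in
theorem charFn_L2 (q : ℝ → ℝ) (h0 : Integrable q) :
    2 * eLpNorm q 2 volume ≤ eLpNorm (charFn q) 2 volume := by
  set c : ℝ := (2 * Real.pi)⁻¹ with hc
  have hcpos : 0 < c := by positivity
  have hq0 : Integrable (fun x => (q x : ℂ)) := h0.ofReal
  set F := 𝓕 (fun x => (q x : ℂ)) with hF
  have e : charFn q = fun t => F (-c * t) := funext (charFn_eq_fourier q)
  have hFc : Continuous F := by
    exact VectorFourier.fourierIntegral_continuous Real.continuous_fourierChar continuous_inner hq0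
  have hq : eLpNorm q 2 volume = eLpNorm (fun x => (q x : ℂ)) 2 volume :=
    eLpNorm_congr_norm_ae (by simp)
  have hs : eLpNorm (charFn q) 2 volume = (ENNReal.ofReal (2 * Real.pi)) ^ (1/2:ℝ) * eLpNorm F 2 volume := by
    rw [e]
    rw [eLpNorm_eq_lintegral_rpow_enorm_toReal (by norm_num) (by norm_num),
      eLpNorm_eq_lintegral_rpow_enorm_toReal (by norm_num) (by norm_num)]
    simp only [ENNReal.toReal_ofNat]
    have hm : ∫⁻ x, ‖F x‖ₑ ^ (2:ℝ) ∂(Measure.map (fun t => -c * t) volume) = ∫⁻ t, ‖F (-c * t)‖ₑ ^ (2:ℝ) := by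
      rw [lintegral_map (by fun_prop) (by fun_prop)]
    rw [← hm, Real.map_volume_mul_left (neg_ne_zero.2 hcpos.ne'), lintegral_smul_measure, smul_eq_mul, ENNReal.mul_rpow_of_nonneg _ _ (by norm_num)]
    congr 2
    rw [hc]; simp [abs_of_pos Real.pi_pos]
  have h2 : (2 : ℝ≥0∞) ≤ (ENNReal.ofReal (2 * Real.pi)) ^ (1/2:ℝ) := by
    rw [ENNReal.ofReal_rpow_of_nonneg (by positivity) (by norm_num), ← Real.sqrt_eq_rpow]
    rw [show (2:ℝ≥0∞) = ENNReal.ofReal 2 by simp]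
    apply ENNReal.ofReal_le_ofReal
    apply Real.le_sqrt_of_sq_le
    nlinarith [Real.pi_gt_three]
  rw [hs, hq]
  by_cases hM : MemLp F 2 volume
  · rw [plancherel_aux _ hq0 hM]
    gcongr
  · have : eLpNorm F 2 volume = ⊤ := by
      by_contra hne
      exact hM ⟨hFc.aestronglyMeasurable, lt_top_iff_ne_top.2 hne⟩
    rw [this, ENNReal.mul_top]
    · simp
    · intro h; rw [h] at h2; simp at h2

theorem std_nonneg (x : ℝ) : 0 < stdNormalPDF x := by
  unfold stdNormalPDF; positivity

theorem std_cont : Continuous stdNormalPDF := by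
  unfold stdNormalPDF; fun_prop

theorem std_eq_gauss : stdNormalPDF = ProbabilityTheory.gaussianPDFReal 0 1 := by
  ext x; simp [stdNormalPDF, ProbabilityTheory.gaussianPDFReal]

theorem std_integral : ∫ x, stdNormalPDF x = 1 := by
  rw [std_eq_gauss]; exact ProbabilityTheory.integral_gaussianPDFReal_eq_one 0 one_ne_zero

theorem std_pow_integrable (n : ℕ) : Integrable (fun x => x ^ n * stdNormalPDF x) := by
  have h := integrable_rpow_mul_exp_neg_mul_sq (b := 1/2) (by norm_num) (s := n) (by
    have : (0:ℝ) ≤ n := Nat.cast_nonneg n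
    linarith)
  refine (h.const_mul (Real.sqrt (2 * Real.pi))⁻¹).congr (ae_of_all _ fun x => ?_)
  simp only [stdNormalPDF, Real.rpow_natCast]
  rw [show -(1/2:ℝ) * x ^ 2 = -x ^ 2 / 2 by ring]
  ring

theorem charFn_std (t : ℝ) : charFn stdNormalPDF t = Complex.exp (-(t : ℂ) ^ 2 / 2) := by
  have h := ProbabilityTheory.complexMGF_id_gaussianReal (μ := 0) (v := 1) (Complex.I * t)
  unfold ProbabilityTheory.complexMGF at h
  rw [ProbabilityTheory.integral_gaussianReal_eq_integral_smul one_ne_zero] at h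
  unfold charFn
  rw [std_eq_gauss]
  refine Eq.trans (integral_congr_ae (ae_of_all _ fun x => ?_)) (h.trans ?_)
  · simp [mul_comm]
  · congr 1
    simp [mul_pow]

theorem gauss_step (n : ℕ) (P P' : ℝ → ℂ)
    (h : ∀ t, charFn (fun x => x ^ n * stdNormalPDF x) t = Complex.exp (-(t : ℂ) ^ 2 / 2) * P t)
    (hP : ∀ t, HasDerivAt P (P' t) t) (t : ℝ) :
    charFn (fun x => x ^ (n + 1) * stdNormalPDF x) t =
      Complex.exp (-(t : ℂ) ^ 2 / 2) * (-Complex.I * (P' t - t * P t)) := by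
  have h1 := charFn_hasDeriv (fun x => x ^ n * stdNormalPDF x) (std_pow_integrable n)
    ((std_pow_integrable (n+1)).congr (ae_of_all _ fun x => by ring)) t
  have h2 : HasDerivAt (fun t : ℝ => Complex.exp (-(t : ℂ) ^ 2 / 2)) (Complex.exp (-(t : ℂ) ^ 2 / 2) * (-t)) t := by
    have h3 : HasDerivAt (fun z : ℂ => Complex.exp (-z ^ 2 / 2)) (Complex.exp (-(t : ℂ) ^ 2 / 2) * (-t)) (t:ℂ) := by
      have := (((hasDerivAt_id (t:ℂ)).pow 2).neg.div_const 2).cexp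
      simp at this
      refine this.congr_deriv ?_
      ring
    exact h3.comp_ofReal
  have h4 := (h2.mul (hP t))
  have h5 : charFn (fun x => x ^ n * stdNormalPDF x) =
    (fun t : ℝ => Complex.exp (-(t : ℂ) ^ 2 / 2)) * P := funext h
  rw [h5] at h1
  have h6 := h1.unique h4
  have h7 : (fun x => x * (x ^ n * stdNormalPDF x)) = fun x => x ^ (n+1) * stdNormalPDF x := by
    ext x; ring
  rw [h7] at h6
  have : charFn (fun x => x ^ (n + 1) * stdNormalPDF x) t =
    -Complex.I * (Complex.I * charFn (fun x => x ^ (n + 1) * stdNormalPDF x) t) := by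
    rw [← mul_assoc]; simp
  rw [this, h6]; ring

theorem hasDerivAt_ofReal_pow (n : ℕ) (t : ℝ) :
    HasDerivAt (fun t : ℝ => (t : ℂ) ^ n) (n * (t : ℂ) ^ (n - 1)) t := by
  exact (hasDerivAt_pow n (t : ℂ)).comp_ofReal

theorem gM0 (t : ℝ) : charFn (fun x => x ^ 0 * stdNormalPDF x) t
    = Complex.exp (-(t : ℂ) ^ 2 / 2) * (fun _ => 1 : ℝ → ℂ) t := by
  simp [charFn_std]

theorem gM1 (t : ℝ) : charFn (fun x => x ^ 1 * stdNormalPDF x) t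
    = Complex.exp (-(t : ℂ) ^ 2 / 2) * (fun s : ℝ => Complex.I * (s : ℂ) ^ 1) t := by
  rw [gauss_step 0 _ (fun _ => 0) gM0 (fun t => hasDerivAt_const _ _)]
  simp

theorem gM2 (t : ℝ) : charFn (fun x => x ^ 2 * stdNormalPDF x) t
    = Complex.exp (-(t : ℂ) ^ 2 / 2) * (fun s : ℝ => 1 - (s : ℂ) ^ 2) t := by
  rw [gauss_step 1 _ _ gM1 (fun t => (hasDerivAt_ofReal_pow 1 t).const_mul Complex.I)]
  simp
  linear_combination Complex.exp (-(t : ℂ) ^ 2 / 2) * (t^2 - 1 : ℂ) * Complex.I_mul_I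

theorem gM3 (t : ℝ) : charFn (fun x => x ^ 3 * stdNormalPDF x) t
    = Complex.exp (-(t : ℂ) ^ 2 / 2) * (fun s : ℝ => Complex.I * (3 * (s : ℂ) ^ 1 - (s : ℂ) ^ 3)) t := by
  rw [gauss_step 2 _ _ gM2 (fun t => (hasDerivAt_ofReal_pow 2 t).const_sub 1)]
  simp
  ring

theorem gM4 (t : ℝ) : charFn (fun x => x ^ 4 * stdNormalPDF x) t
    = Complex.exp (-(t : ℂ) ^ 2 / 2) * (fun s : ℝ => 3 - 6 * (s : ℂ) ^ 2 + (s : ℂ) ^ 4) t := by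
  rw [gauss_step 3 _ _ gM3 (fun t => (((hasDerivAt_ofReal_pow 1 t).const_mul 3).sub
    (hasDerivAt_ofReal_pow 3 t)).const_mul Complex.I)]
  simp
  linear_combination Complex.exp (-(t : ℂ) ^ 2 / 2) * (-(t^4 -6 * t^2 + 3) : ℂ) * Complex.I_mul_I

theorem gM5 (t : ℝ) : charFn (fun x => x ^ 5 * stdNormalPDF x) t
    = Complex.exp (-(t : ℂ) ^ 2 / 2) *
      (fun s : ℝ => Complex.I * (15 * (s : ℂ) ^ 1 - 10 * (s : ℂ) ^ 3 + (s : ℂ) ^ 5)) t := by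
  rw [gauss_step 4 _ _ gM4 (fun t => ((((hasDerivAt_ofReal_pow 2 t).const_mul 6).const_sub 3).add
    (hasDerivAt_ofReal_pow 4 t)))]
  simp
  ring

theorem gM6_zero : charFn (fun x => x ^ 6 * stdNormalPDF x) 0 = 15 := by
  rw [gauss_step 5 _ _ gM5 (fun t => ((((hasDerivAt_ofReal_pow 1 t).const_mul 15).sub
    ((hasDerivAt_ofReal_pow 3 t).const_mul 10)).add (hasDerivAt_ofReal_pow 5 t)).const_mul Complex.I)]
  simp
  linear_combination (-15 : ℂ) * Complex.I_mul_I

theorem charFn_zero (q : ℝ → ℝ) : charFn q 0 = ((∫ x, q x : ℝ) : ℂ) := by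
  unfold charFn; simp [integral_complex_ofReal]

theorem mom2 : ∫ x, x ^ 2 * stdNormalPDF x = 1 := by
  have := gM2 0
  rw [charFn_zero] at this
  simp at this
  exact_mod_cast this

theorem mom6 : ∫ x, x ^ 6 * stdNormalPDF x = 15 := by
  have := gM6_zero
  rw [charFn_zero] at this
  exact_mod_cast this

/-- the Edgeworth density -/
noncomputable def phiA (α : ℝ) (x : ℝ) : ℝ := stdNormalPDF x * (1 + α * (x ^ 3 - 3 * x) / 6)

theorem charFn_integrable (q : ℝ → ℝ) (hq : Integrable q) (t : ℝ) :
    Integrable (fun x : ℝ => Complex.exp (Complex.I * t * x) * (q x : ℂ)) := by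
  have hq0 : Integrable (fun x => (q x : ℂ)) := hq.ofReal
  refine hq0.bdd_mul (c := 1) (by fun_prop) (ae_of_all _ fun x => ?_)
  rw [Complex.norm_exp]; simp

theorem charFn_sub (q r : ℝ → ℝ) (hq : Integrable q) (hr : Integrable r) (t : ℝ) :
    charFn (fun x => q x - r x) t = charFn q t - charFn r t := by
  unfold charFn
  rw [← integral_sub (charFn_integrable q hq t) (charFn_integrable r hr t)]
  congr 1; ext x; push_cast; ring

theorem charFn_const_mul (q : ℝ → ℝ) (c : ℝ) (t : ℝ) :
    charFn (fun x => c * q x) t = c * charFn q t := by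
  unfold charFn
  rw [← integral_const_mul]
  congr 1; ext x; push_cast; ring

theorem phiA_eq (α x : ℝ) : phiA α x = x ^ 0 * stdNormalPDF x -
    ((α / 2) * (x ^ 1 * stdNormalPDF x) - (α / 6) * (x ^ 3 * stdNormalPDF x)) := by
  unfold phiA; ring

theorem phiA_pow_integrable (α : ℝ) (n : ℕ) : Integrable (fun x => x ^ n * phiA α x) := by
  have := (std_pow_integrable n).sub (((std_pow_integrable (n+1)).const_mul (α/2)).sub
    ((std_pow_integrable (n+3)).const_mul (α/6)))
  refine this.congr (ae_of_all _ fun x => ?_)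
  simp only [Pi.sub_apply, phiA]
  ring

theorem charFn_phiA (α : ℝ) : charFn (phiA α) = gAlpha α := by
  ext t
  rw [show phiA α = fun x => x ^ 0 * stdNormalPDF x -
    ((α / 2) * (x ^ 1 * stdNormalPDF x) - (α / 6) * (x ^ 3 * stdNormalPDF x)) from
    funext (phiA_eq α)]
  rw [charFn_sub _ (fun x => (α / 2) * (x ^ 1 * stdNormalPDF x) - (α / 6) * (x ^ 3 * stdNormalPDF x))
    (std_pow_integrable 0) (((std_pow_integrable 1).const_mul (α/2)).sub
    ((std_pow_integrable 3).const_mul (α/6))), charFn_sub _ _ ((std_pow_integrable 1).const_mul (α/2))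
    ((std_pow_integrable 3).const_mul (α/6)), charFn_const_mul, charFn_const_mul, gM0, gM1, gM3]
  unfold gAlpha
  push_cast
  rw [mul_pow, show Complex.I ^ 3 = -Complex.I by
    rw [pow_succ, Complex.I_sq]; ring]
  ring

theorem iter3_charFn (q : ℝ → ℝ) (h : ∀ n : ℕ, n ≤ 3 → Integrable (fun x => x ^ n * q x)) (t : ℝ) :
    iteratedDeriv 3 (charFn q) t = Complex.I ^ 3 * charFn (fun x => x ^ 3 * q x) t := by
  have step : ∀ n : ℕ, n + 1 ≤ 3 → ∀ t, HasDerivAt (charFn (fun x => x ^ n * q x))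
      (Complex.I * charFn (fun x => x ^ (n+1) * q x) t) t := by
    intro n hn t
    have h1 := charFn_hasDeriv (fun x => x ^ n * q x) (h n (by omega))
      ((h (n+1) hn).congr (ae_of_all _ fun x => by ring)) t
    rwa [show (fun x => x * (x ^ n * q x)) = fun x => x ^ (n+1) * q x by ext x; ring] at h1
  have e0 : charFn q = charFn (fun x => x ^ 0 * q x) := by simp
  rw [iteratedDeriv_eq_iterate]
  simp only [Function.iterate_succ, Function.iterate_zero, Function.comp, id]
  rw [e0, show deriv (charFn fun x => x ^ 0 * q x) =
    fun t => Complex.I * charFn (fun x => x ^ (0+1) * q x) t from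
    funext fun t => (step 0 (by norm_num) t).deriv]
  rw [show deriv (fun t => Complex.I * charFn (fun x => x ^ (0+1) * q x) t) =
    fun t => Complex.I * (Complex.I * charFn (fun x => x ^ (0+1+1) * q x) t) from
    funext fun t => ((step 1 (by norm_num) t).const_mul _).deriv]
  rw [(((step 2 (by norm_num) t).const_mul _).const_mul _).deriv]
  ring

theorem pw_bound (r a M : ℝ) (hr : 0 ≤ r) (hM : 2 ≤ M) (hl : Real.log r ≤ M) :
    r * Real.log r - r + 1 ≤ a ^ 2 + |r - 1 - a| * M := by
  have habs := abs_nonneg (r - 1 - a)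
  have hsq : r * Real.log r - r + 1 ≤ (r - 1) ^ 2 := by
    rcases hr.eq_or_lt with h | h
    · rw [← h]; simp
    · nlinarith [Real.log_le_sub_one_of_pos h]
  have h2M : |r - 1 - a| * 2 ≤ |r - 1 - a| * M := mul_le_mul_of_nonneg_left hM habs
  rcases le_or_gt r 1 with h1 | h1
  · have : (r - 1) ^ 2 ≤ a ^ 2 + |r - 1 - a| * 2 := by
      rcases le_total 0 (r - 1 - a) with hv | hv
      · rw [abs_of_nonneg hv]
        nlinarith
      · rw [abs_of_nonpos hv]
        rcases le_total 0 a with ha | ha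
        · nlinarith [sq_nonneg a]
        · nlinarith
    linarith
  · rcases le_or_gt (r - 1 - a) 0 with hv | hv
    · nlinarith [mul_nonneg habs (by linarith : (0:ℝ) ≤ M)]
    · rw [abs_of_pos hv] at *
      have hlog0 : 0 < Real.log r := Real.log_pos h1
      have hvM : (r - 1 - a) * Real.log r ≤ (r - 1 - a) * M :=
        mul_le_mul_of_nonneg_left hl hv.le
      rcases le_or_gt a 0 with ha | ha
      · nlinarith [Real.log_le_sub_one_of_pos (by linarith : 0 < r), sq_nonneg a]
      · have h1a : 0 < 1 + a := by linarith
        have e : Real.log r = Real.log (1 + a) + Real.log (r / (1 + a)) := by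
          rw [← Real.log_mul h1a.ne' (by positivity)]
          congr 1; field_simp
        have b1 := Real.log_le_sub_one_of_pos h1a
        have b2 := Real.log_le_sub_one_of_pos (by positivity : 0 < r / (1 + a))
        have b3 : (1 + a) * Real.log r ≤ (1 + a) * (a + (r / (1 + a) - 1)) :=
          mul_le_mul_of_nonneg_left (by linarith) h1a.le
        have b4 : (1 + a) * (a + (r / (1 + a) - 1)) = (1 + a) * (a - 1) + r := by
          field_simp; ring
        nlinarith

theorem log_bound (p x : ℝ) (hp : 0 ≤ p) :
    Real.log (p / stdNormalPDF x) ≤ 2 + x ^ 2 / 2 + 2 * Real.sqrt p := by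
  rcases hp.eq_or_lt with h | h
  · rw [← h]; simp; positivity
  · rw [Real.log_div h.ne' (std_nonneg x).ne']
    have hs : 0 < Real.sqrt (2 * Real.pi) := by positivity
    have e : Real.log (stdNormalPDF x) = - Real.log (Real.sqrt (2 * Real.pi)) + (-x ^ 2 / 2) := by
      unfold stdNormalPDF
      rw [Real.log_mul (by positivity) (by positivity), Real.log_inv, Real.log_exp]
    have h3 : Real.sqrt (2 * Real.pi) ≤ 3 := by
      apply Real.sqrt_le_iff.2
      constructor
      · norm_num
      · nlinarith [Real.pi_lt_four]
    have h4 := Real.log_le_sub_one_of_pos hs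
    have h5 : Real.log p = 2 * Real.log (Real.sqrt p) := by
      rw [Real.log_sqrt hp]; ring
    have h6 := Real.log_le_sub_one_of_pos (Real.sqrt_pos.2 h)
    rw [e, h5]; linarith

theorem weight_bound (x : ℝ) :
    2 + x ^ 2 / 2 ≤ (1 + |x ^ 3|) * (3 / Real.sqrt (1 + x ^ 2)) := by
  rw [← sq_abs, abs_pow]
  set y := |x| with hy
  have hy0 : 0 ≤ y := abs_nonneg x
  have hs : 0 < Real.sqrt (1 + y ^ 2) := by positivity
  have h1 : Real.sqrt (1 + y ^ 2) ≤ 1 + y := by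
    apply Real.sqrt_le_iff.2
    constructor
    · positivity
    · nlinarith
  rw [← mul_div_assoc, le_div_iff₀ hs]
  calc (2 + y ^ 2 / 2) * Real.sqrt (1 + y ^ 2) ≤ (2 + y ^ 2 / 2) * (1 + y) := by gcongr
    _ ≤ (1 + y ^ 3) * 3 := by
      nlinarith [mul_nonneg hy0 (sq_nonneg (y - 1)), sq_nonneg (y - 1), mul_nonneg hy0 (sq_nonneg (y - 3/4)), sq_nonneg (y - 3/4)]

theorem cs_bound (f g : ℝ → ℝ) (c : ℝ) (hc : 0 ≤ c) (hf : AEStronglyMeasurable f volume)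
    (hg : Measurable g) (hi : Integrable (fun x => g x ^ 2)) (h : ∫ x, g x ^ 2 ≤ c ^ 2) :
    ∫⁻ x, ENNReal.ofReal (|f x| * g x) ≤ eLpNorm f 2 volume * ENNReal.ofReal c := by
  have h1 := ENNReal.lintegral_mul_le_Lp_mul_Lq volume (Real.HolderConjugate.two_two)
    (f := fun x => ‖f x‖ₑ) (g := fun x => ‖g x‖ₑ) hf.enorm hg.enorm.aemeasurable
  calc ∫⁻ x, ENNReal.ofReal (|f x| * g x) ≤ ∫⁻ x, ((fun x => ‖f x‖ₑ) * (fun x => ‖g x‖ₑ)) x := by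
        apply lintegral_mono
        intro x
        simp only [Pi.mul_apply]
        rw [ENNReal.ofReal_mul (abs_nonneg _), ← Real.norm_eq_abs, ofReal_norm]
        gcongr
        exact Real.ofReal_le_enorm _
    _ ≤ _ := h1
    _ ≤ _ := by
        rw [eLpNorm_eq_lintegral_rpow_enorm_toReal (by norm_num) (by norm_num)]
        simp only [ENNReal.toReal_ofNat]
        gcongr
        have e : ∫⁻ x, ‖g x‖ₑ ^ (2:ℝ) = ENNReal.ofReal (∫ x, g x ^ 2) := by
          rw [ofReal_integral_eq_lintegral_ofReal hi (ae_of_all _ fun x => sq_nonneg _)]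
          congr 1; ext x
          rw [ENNReal.rpow_two, ← ofReal_norm, ← ENNReal.ofReal_pow (norm_nonneg _)]
          simp
        rw [e, ENNReal.ofReal_rpow_of_nonneg (integral_nonneg fun x => sq_nonneg _) (by norm_num),
          ← Real.sqrt_eq_rpow]
        apply ENNReal.ofReal_le_ofReal
        exact Real.sqrt_le_iff.2 ⟨hc, h⟩

theorem gauss_part (α : ℝ) :
    ∫⁻ x, ENNReal.ofReal (stdNormalPDF x * (α * (x ^ 3 - 3 * x) / 6) ^ 2) ≤ ENNReal.ofReal (α ^ 2) := by
  have hi : Integrable (fun x => α ^ 2 / 36 * (x ^ 6 * stdNormalPDF x + 9 * (x ^ 2 * stdNormalPDF x))) :=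
    ((std_pow_integrable 6).add ((std_pow_integrable 2).const_mul 9)).const_mul _
  calc _ ≤ ∫⁻ x, ENNReal.ofReal (α ^ 2 / 36 * (x ^ 6 * stdNormalPDF x + 9 * (x ^ 2 * stdNormalPDF x))) := by
        apply lintegral_mono
        intro x
        apply ENNReal.ofReal_le_ofReal
        have : 0 ≤ stdNormalPDF x * α ^ 2 * x ^ 4 := by
          have := (std_nonneg x).le
          positivity
        nlinarith
    _ = ENNReal.ofReal (∫ x, α ^ 2 / 36 * (x ^ 6 * stdNormalPDF x + 9 * (x ^ 2 * stdNormalPDF x))) := by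
        rw [ofReal_integral_eq_lintegral_ofReal hi (ae_of_all _ fun x => ?_)]
        have := (std_nonneg x).le
        show 0 ≤ _
        positivity
    _ ≤ _ := by
        apply ENNReal.ofReal_le_ofReal
        rw [integral_const_mul, integral_add (std_pow_integrable 6)
          ((std_pow_integrable 2).const_mul 9), integral_const_mul, mom2, mom6]
        nlinarith [sq_nonneg α]

theorem ofReal_integral_le (F : ℝ → ℝ) :
    ENNReal.ofReal (∫ x, F x) ≤ ∫⁻ x, ENNReal.ofReal (F x) := by
  by_cases hF : Integrable F
  · have h1 : ∫ x, F x ≤ ∫ x, max (F x) 0 :=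
      integral_mono hF hF.pos_part fun x => le_max_left _ _
    refine (ENNReal.ofReal_le_ofReal h1).trans ?_
    rw [ofReal_integral_eq_lintegral_ofReal hF.pos_part (ae_of_all _ fun x => le_max_right _ _)]
    apply lintegral_mono
    intro x
    simp
  · rw [integral_undef hF]; simp

theorem main_pw (p : ℝ → ℝ) (hp : ∀ x, 0 ≤ p x) (α x : ℝ) :
    p x * Real.log (p x / stdNormalPDF x) - p x + stdNormalPDF x ≤
      stdNormalPDF x * (α * (x ^ 3 - 3 * x) / 6) ^ 2
      + |p x - phiA α x| * (3 / Real.sqrt (1 + x ^ 2))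
      + |x ^ 3 * (p x - phiA α x)| * (3 / Real.sqrt (1 + x ^ 2))
      + |p x - phiA α x| * (2 * Real.sqrt (p x)) := by
  have hφ := std_nonneg x
  set φ := stdNormalPDF x with hφd
  set a := α * (x ^ 3 - 3 * x) / 6 with ha
  have h := pw_bound (p x / φ) a (2 + x ^ 2 / 2 + 2 * Real.sqrt (p x)) (div_nonneg (hp x) hφ.le)
    (by nlinarith [Real.sqrt_nonneg (p x), sq_nonneg x]) (log_bound _ _ (hp x))
  have h1 := mul_le_mul_of_nonneg_left h hφ.le
  have e1 : φ * (p x / φ * Real.log (p x / φ) - p x / φ + 1) = p x * Real.log (p x / φ) - p x + φ := by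
    field_simp
  have e2 : φ * |p x / φ - 1 - a| = |p x - phiA α x| := by
    rw [← abs_of_pos hφ, ← abs_mul, abs_of_pos hφ]
    congr 1
    unfold phiA
    rw [← hφd, ← ha]
    field_simp
    ring
  have hw := mul_le_mul_of_nonneg_left (weight_bound x) (abs_nonneg (p x - phiA α x))
  rw [abs_mul (x ^ 3)]
  rw [e1] at h1
  have e3 : φ * (a ^ 2 + |p x / φ - 1 - a| * (2 + x ^ 2 / 2 + 2 * Real.sqrt (p x))) =
    φ * a ^ 2 + |p x - phiA α x| * (2 + x ^ 2 / 2 + 2 * Real.sqrt (p x)) := by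
    rw [← e2]; ring
  rw [e3] at h1
  linarith

/-- Proposition 3.1: let `X` be a random variable with `E|X|³ < ∞`, density `p`,
characteristic function `f`, and let `Z` be standard normal. Then for every real `α`,
`D(X‖Z) ≤ α² + 4(‖f - g_α‖₂ + ‖f''' - g_α'''‖₂)`, the inequality being stated in
`[0,∞]` (via `eLpNorm`) so that it trivially holds when the right-hand side is
infinite. -/
theorem relative_entropy_edgeworth_bound (p : ℝ → ℝ)
    (hp : IsProbDensity p)
    (hmom : Integrable (fun x => |x| ^ 3 * p x) volume) :
    ∀ α : ℝ,
      ENNReal.ofReal (∫ x, p x * Real.log (p x / stdNormalPDF x)) ≤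
        ENNReal.ofReal (α ^ 2) +
        4 * (eLpNorm (fun t => charFn p t - gAlpha α t) 2 volume +
             eLpNorm (fun t => iteratedDeriv 3 (charFn p) t - iteratedDeriv 3 (gAlpha α) t)
               2 volume) := by
  intro α
  obtain ⟨hpm, hp0, hp1⟩ := hp
  by_cases hD : Integrable (fun x => p x * Real.log (p x / stdNormalPDF x))
  swap
  · rw [integral_undef hD]; simp
  have hpi : Integrable p := by
    by_contra hc
    rw [integral_undef hc] at hp1
    norm_num at hp1
  have hφi : Integrable stdNormalPDF := by simpa using std_pow_integrable 0
  have hpn : ∀ n : ℕ, n ≤ 3 → Integrable (fun x => x ^ n * p x) := by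
    intro n hn
    refine (hpi.add hmom).mono' (by fun_prop) (ae_of_all _ fun x => ?_)
    rw [norm_mul, norm_pow, Real.norm_eq_abs, Real.norm_eq_abs, abs_of_nonneg (hp0 x), Pi.add_apply]
    have : |x| ^ n ≤ 1 + |x| ^ 3 := by
      rcases le_total (|x|) 1 with h | h
      · have := pow_le_one₀ (n := n) (abs_nonneg x) h
        have := pow_nonneg (abs_nonneg x) 3
        linarith
      · have := pow_le_pow_right₀ h hn
        linarith
    nlinarith [mul_le_mul_of_nonneg_right this (hp0 x)]
  set u : ℝ → ℝ := fun x => p x - phiA α x with hu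
  have hAi : Integrable (phiA α) := by simpa using phiA_pow_integrable α 0
  have hui : Integrable u := hpi.sub hAi
  have hu3 : Integrable (fun x => x ^ 3 * u x) :=
    ((hpn 3 le_rfl).sub (phiA_pow_integrable α 3)).congr (ae_of_all _ fun x => by
      simp only [Pi.sub_apply, hu]; ring)
  have e1 : (fun t => charFn p t - gAlpha α t) = charFn u := by
    ext t
    rw [← charFn_phiA, hu, charFn_sub _ _ hpi hAi]
  have e2 : eLpNorm (fun t => iteratedDeriv 3 (charFn p) t - iteratedDeriv 3 (gAlpha α) t) 2 volume
      = eLpNorm (charFn (fun x => x ^ 3 * u x)) 2 volume := by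
    apply eLpNorm_congr_norm_ae
    refine ae_of_all _ fun t => ?_
    rw [← charFn_phiA, iter3_charFn p hpn, iter3_charFn (phiA α) (fun n _ => phiA_pow_integrable α n),
      ← mul_sub, ← charFn_sub _ _ (hpn 3 le_rfl) (phiA_pow_integrable α 3), norm_mul]
    simp [hu, mul_sub]
  rw [e1, e2]
  have L1 := charFn_L2 u hui
  have L2 := charFn_L2 _ hu3
  have eD : ∫ x, p x * Real.log (p x / stdNormalPDF x) =
      ∫ x, (p x * Real.log (p x / stdNormalPDF x) - p x + stdNormalPDF x) := by
    have hDp : Integrable (fun x => p x * Real.log (p x / stdNormalPDF x) - p x) := hD.sub hpi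
    rw [integral_add hDp hφi, integral_sub hD hpi, hp1, std_integral]
    ring
  have hWi : Integrable (fun x : ℝ => (3 / Real.sqrt (1 + x ^ 2)) ^ 2) := by
    refine (integrable_inv_one_add_sq.const_mul 9).congr (ae_of_all _ fun x => ?_)
    simp only
    rw [div_pow, Real.sq_sqrt (by positivity)]
    ring
  have hW : ∫ x : ℝ, (3 / Real.sqrt (1 + x ^ 2)) ^ 2 ≤ 6 ^ 2 := by
    have : ∫ x : ℝ, (3 / Real.sqrt (1 + x ^ 2)) ^ 2 = ∫ x : ℝ, 9 * (1 + x ^ 2)⁻¹ := by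
      congr 1; ext x
      rw [div_pow, Real.sq_sqrt (by positivity)]
      ring
    rw [this, integral_const_mul, integral_univ_inv_one_add_sq]
    linarith [Real.pi_lt_four]
  have hPi : Integrable (fun x : ℝ => (2 * Real.sqrt (p x)) ^ 2) := by
    refine (hpi.const_mul 4).congr (ae_of_all _ fun x => ?_)
    simp only
    rw [mul_pow, Real.sq_sqrt (hp0 x)]
    ring
  have hP : ∫ x : ℝ, (2 * Real.sqrt (p x)) ^ 2 ≤ 2 ^ 2 := by
    have : ∫ x : ℝ, (2 * Real.sqrt (p x)) ^ 2 = ∫ x : ℝ, 4 * p x := by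
      congr 1; ext x
      rw [mul_pow, Real.sq_sqrt (hp0 x)]
      ring
    rw [this, integral_const_mul, hp1]
    norm_num
  have hWm : Measurable (fun x : ℝ => 3 / Real.sqrt (1 + x ^ 2)) := by fun_prop
  have hPm : Measurable (fun x : ℝ => 2 * Real.sqrt (p x)) := by fun_prop
  have c1 := cs_bound u _ 6 (by norm_num) hui.1 hWm hWi hW
  have c2 := cs_bound _ _ 6 (by norm_num) hu3.1 hWm hWi hW
  have c3 := cs_bound u _ 2 (by norm_num) hui.1 hPm hPi hP
  have hAm : Measurable (phiA α) := by
    have := std_cont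
    have : Continuous (phiA α) := by unfold phiA; fun_prop
    exact this.measurable
  have hum : Measurable u := hpm.sub hAm
  have hφm := std_cont.measurable
  calc ENNReal.ofReal (∫ x, p x * Real.log (p x / stdNormalPDF x))
      ≤ ∫⁻ x, ENNReal.ofReal (p x * Real.log (p x / stdNormalPDF x) - p x + stdNormalPDF x) := by
        rw [eD]; exact ofReal_integral_le _
    _ ≤ ∫⁻ x, (ENNReal.ofReal (stdNormalPDF x * (α * (x ^ 3 - 3 * x) / 6) ^ 2)
          + ENNReal.ofReal (|u x| * (3 / Real.sqrt (1 + x ^ 2)))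
          + ENNReal.ofReal (|x ^ 3 * u x| * (3 / Real.sqrt (1 + x ^ 2)))
          + ENNReal.ofReal (|u x| * (2 * Real.sqrt (p x)))) := by
        apply lintegral_mono
        intro x
        refine (ENNReal.ofReal_le_ofReal (main_pw p hp0 α x)).trans ?_
        refine ENNReal.ofReal_add_le.trans (add_le_add ?_ le_rfl)
        refine ENNReal.ofReal_add_le.trans (add_le_add ?_ le_rfl)
        exact ENNReal.ofReal_add_le
    _ = (∫⁻ x, ENNReal.ofReal (stdNormalPDF x * (α * (x ^ 3 - 3 * x) / 6) ^ 2))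
          + (∫⁻ x, ENNReal.ofReal (|u x| * (3 / Real.sqrt (1 + x ^ 2))))
          + (∫⁻ x, ENNReal.ofReal (|x ^ 3 * u x| * (3 / Real.sqrt (1 + x ^ 2))))
          + (∫⁻ x, ENNReal.ofReal (|u x| * (2 * Real.sqrt (p x)))) := by
        have m1 : Measurable (fun x => ENNReal.ofReal (|u x| * (2 * Real.sqrt (p x)))) :=
          ((measurable_norm.comp hum).mul hPm).ennreal_ofReal
        have m2 : Measurable (fun x => ENNReal.ofReal (|x ^ 3 * u x| * (3 / Real.sqrt (1 + x ^ 2)))) :=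
          ((measurable_norm.comp ((measurable_id.pow_const 3).mul hum)).mul hWm).ennreal_ofReal
        have m3 : Measurable (fun x => ENNReal.ofReal (|u x| * (3 / Real.sqrt (1 + x ^ 2)))) :=
          ((measurable_norm.comp hum).mul hWm).ennreal_ofReal
        rw [lintegral_add_right _ m1, lintegral_add_right _ m2, lintegral_add_right _ m3]
    _ ≤ ENNReal.ofReal (α ^ 2) + eLpNorm u 2 volume * ENNReal.ofReal 6
          + eLpNorm (fun x => x ^ 3 * u x) 2 volume * ENNReal.ofReal 6
          + eLpNorm u 2 volume * ENNReal.ofReal 2 := by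
        gcongr
        exact gauss_part α
    _ ≤ ENNReal.ofReal (α ^ 2) + 4 * (2 * eLpNorm u 2 volume +
          2 * eLpNorm (fun x => x ^ 3 * u x) 2 volume) := by
        generalize eLpNorm u 2 volume = A
        generalize eLpNorm (fun x => x ^ 3 * u x) 2 volume = B
        have s1 : ENNReal.ofReal 6 = 6 := by simp
        have s2 : ENNReal.ofReal 2 = 2 := by simp
        rw [s1, s2]
        calc _ = ENNReal.ofReal (α ^ 2) + (8 * A + 6 * B) := by ring
          _ ≤ ENNReal.ofReal (α ^ 2) + (8 * A + 8 * B) := by gcongr; norm_num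
          _ = _ := by ring
    _ ≤ _ := by gcongr
end

section
/- There is an absolute constant c > 0 with the following property. Let X be a random variable with finite variance σ² > 0 having an absolutely continuous distribution with density p satisfying p(x) ≤ M almost everywhere, and let f(t) = E e^{itX} be its characteristic function. Then for all real t, |f(t)| ≤ 1 − c·min{1, σ²t²}/(M²σ²). -/
open MeasureTheory

lemma aux_norm (p : ℝ → ℝ) (hi : Integrable p) (t : ℝ) :
    ∃ θ : ℝ, ‖charFn p t‖ = ∫ x, Real.cos (t * x - θ) * p x := by
  refine ⟨(charFn p t).arg, ?_⟩
  set z := charFn p t with hz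
  set θ := z.arg
  have h1 : (‖z‖ : ℂ) = Complex.exp (-(θ * Complex.I)) * z := by
    conv_rhs => rw [← Complex.norm_mul_exp_arg_mul_I z]
    rw [mul_left_comm, ← Complex.exp_add]
    simp [θ]
  have h2 : (‖z‖ : ℂ) = ∫ x : ℝ, Complex.exp (((t * x - θ : ℝ) : ℂ) * Complex.I) * (p x : ℂ) := by
    rw [h1, hz, charFn, ← integral_const_mul]
    congr 1
    ext x
    rw [← mul_assoc, ← Complex.exp_add]
    congr 2
    push_cast
    ring
  have hint : Integrable
      (fun x : ℝ => Complex.exp (((t * x - θ : ℝ) : ℂ) * Complex.I) * (p x : ℂ)) := by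
    refine (hi.ofReal (𝕜 := ℂ)).bdd_mul (c := 1) ?_ ?_
    · exact Continuous.aestronglyMeasurable (by fun_prop)
    · filter_upwards with x
      rw [Complex.norm_exp_ofReal_mul_I]
  have h3 := congrArg Complex.re h2
  rw [Complex.ofReal_re] at h3
  rw [h3]
  have h4 := integral_re hint
  simp only [RCLike.re_eq_complex_re] at h4
  rw [← h4]
  congr 1
  ext x
  rw [Complex.re_mul_ofReal, Complex.exp_ofReal_mul_I_re]

lemma aux_cover (t θ a σ r : ℝ) (ht : t ≠ 0) (hσ : 0 < σ) (hr : 0 < r) :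
    ∃ B : Set ℝ, MeasurableSet B ∧ volume B ≤ ENNReal.ofReal ((|t| * σ + 3) * (2 * r / |t|)) ∧
      ∀ x, x ∉ B → |x - a| ≤ 2 * σ → 2 / Real.pi ^ 2 * r ^ 2 ≤ 1 - Real.cos (t * x - θ) := by
  have hpi := Real.pi_gt_three
  have hpp := Real.pi_pos
  have ht' : 0 < |t| := abs_pos.mpr ht
  set A := (t * a - θ - 2 * |t| * σ) / (2 * Real.pi) with hA
  set C := (t * a - θ + 2 * |t| * σ) / (2 * Real.pi) with hC
  have hts : 0 < |t| * σ := by positivity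
  have hCA : C - A ≤ |t| * σ := by
    rw [hA, hC, ← sub_div, div_le_iff₀ (by positivity)]
    nlinarith
  have hAC : A ≤ C := by
    rw [hA, hC]; gcongr; linarith
  refine ⟨⋃ k ∈ Finset.Icc (round A) (round C),
    Metric.ball ((θ + 2 * Real.pi * (k : ℤ)) / t) (r / |t|), ?_, ?_, ?_⟩
  · exact Finset.measurableSet_biUnion _ fun k _ => Metric.isOpen_ball.measurableSet
  · refine (measure_biUnion_finset_le _ _).trans ?_
    simp only [Real.volume_ball, Finset.sum_const, Int.card_Icc, nsmul_eq_mul]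
    rw [ENNReal.ofReal_mul (p := |t| * σ + 3) (by positivity)]
    have e0 : 2 * r / |t| = 2 * (r / |t|) := mul_div_assoc _ _ _
    rw [e0]
    apply mul_le_mul' _ le_rfl
    rw [← ENNReal.ofReal_natCast]
    apply ENNReal.ofReal_le_ofReal
    have hm : round A ≤ round C := by
      rw [round_eq, round_eq]; exact Int.floor_mono (by linarith)
    have : ((round C + 1 - round A).toNat : ℝ) = (round C : ℝ) + 1 - round A := by
      have h := Int.toNat_of_nonneg (a := round C + 1 - round A) (by omega)
      exact_mod_cast h
    rw [this]
    have e1 := abs_le.mp (abs_sub_round A)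
    have e2 := abs_le.mp (abs_sub_round C)
    linarith [e1.1, e1.2, e2.1, e2.2]
  · intro x hx hxa
    set u := (t * x - θ) / (2 * Real.pi) with hu
    have hb : |t * (x - a)| ≤ 2 * |t| * σ := by
      rw [abs_mul]; nlinarith
    have hb' := abs_le.mp hb
    have hAu : A ≤ u := by
      rw [hA, hu]; apply div_le_div_of_nonneg_right _ (by positivity); nlinarith [hb'.1]
    have huC : u ≤ C := by
      rw [hC, hu]; apply div_le_div_of_nonneg_right _ (by positivity); nlinarith [hb'.2]
    have hk : round u ∈ Finset.Icc (round A) (round C) := by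
      rw [Finset.mem_Icc]
      simp only [round_eq]
      exact ⟨Int.floor_mono (by linarith), Int.floor_mono (by linarith)⟩
    have hx2 : x ∉ Metric.ball ((θ + 2 * Real.pi * (round u : ℤ)) / t) (r / |t|) := by
      intro h
      exact hx (Set.mem_biUnion (x := round u) hk h)
    set y := t * x - θ - 2 * Real.pi * (round u : ℤ) with hy
    rw [Metric.mem_ball, Real.dist_eq, not_lt] at hx2
    have hyr : r ≤ |y| := by
      have : y = t * (x - (θ + 2 * Real.pi * (round u : ℤ)) / t) := by
        rw [hy]; field_simp; ring
      rw [this, abs_mul]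
      rwa [div_le_iff₀' ht'] at hx2
    have hypi : |y| ≤ Real.pi := by
      have : y = 2 * Real.pi * (u - round u) := by
        rw [hy, hu]; field_simp
      rw [this, abs_mul, abs_of_pos (by positivity : 0 < 2 * Real.pi)]
      nlinarith [abs_sub_round u]
    have hc : Real.cos (t * x - θ) = Real.cos y := by
      rw [hy, mul_comm (2 * Real.pi), Real.cos_sub_int_mul_two_pi]
    have hq := Real.cos_le_one_sub_mul_cos_sq hypi
    rw [hc]
    have : r ^ 2 ≤ y ^ 2 := by rw [← sq_abs y]; gcongr
    have : 2 / Real.pi ^ 2 * r ^ 2 ≤ 2 / Real.pi ^ 2 * y ^ 2 := by gcongr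
    linarith

/-- Proposition 6.1 (Statulevičius): there is an absolute constant `c > 0` such that
for any random variable `X` with finite variance `σ² > 0` and an absolutely continuous
distribution with density `p ≤ M` a.e., the characteristic function `f` of `X` satisfies
`|f(t)| ≤ 1 - c·min{1, σ²t²}/(M²σ²)` for all real `t`. -/
theorem charFn_bound_of_bounded_density :
    ∃ c : ℝ, 0 < c ∧
      ∀ (p : ℝ → ℝ) (M a σ : ℝ),
        IsProbDensity p →
        (∀ᵐ x ∂(volume : Measure ℝ), p x ≤ M) →
        (∫ x, x * p x = a) →
        0 < σ →
        (∫ x, (x - a) ^ 2 * p x = σ ^ 2) →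
        ∀ t : ℝ, ‖charFn p t‖ ≤ 1 - c * min 1 (σ ^ 2 * t ^ 2) / (M ^ 2 * σ ^ 2) := by
  have hpp := Real.pi_pos
  refine ⟨1 / (1024 * Real.pi ^ 2), by positivity, ?_⟩
  rintro p M a σ ⟨hpm, hp0, hp1⟩ hM - hσ hv t
  have hi : Integrable p := by
    by_contra h
    rw [integral_undef h] at hp1
    exact zero_ne_one hp1
  have hvi : Integrable (fun x => (x - a) ^ 2 * p x) := by
    by_contra h
    rw [integral_undef h] at hv
    exact (by positivity : σ ^ 2 ≠ 0) hv.symm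
  have hMpos : 0 < M := by
    by_contra h
    push Not at h
    have : ∫ x, p x ≤ 0 := integral_nonpos_of_ae (by
      filter_upwards [hM] with x hx
      exact hx.trans h)
    linarith
  obtain ⟨θ, hθ⟩ := aux_norm p hi t
  have hci : Integrable (fun x => Real.cos (t * x - θ) * p x) := by
    refine hi.bdd_mul (c := 1) (Continuous.aestronglyMeasurable (by fun_prop)) ?_
    filter_upwards with x
    exact Real.abs_cos_le_one _
  rcases eq_or_ne t 0 with rfl | ht
  · have : ‖charFn p 0‖ ≤ ∫ x, p x := by
      rw [hθ]
      exact integral_mono hci hi fun x => mul_le_of_le_one_left (hp0 x) (Real.cos_le_one _)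
    simpa [hp1] using this
  have ht' : 0 < |t| := abs_pos.mpr ht
  set s := |t| * σ with hs
  have hs0 : 0 < s := by positivity
  set r := |t| / (8 * M * (s + 3)) with hr
  have hr0 : 0 < r := by positivity
  obtain ⟨B, hBm, hBv, hB⟩ := aux_cover t θ a σ r ht hσ hr0
  have hBfin : volume B ≠ ⊤ := ne_top_of_le_ne_top ENNReal.ofReal_ne_top hBv
  have hBr : M * volume.real B ≤ 1 / 4 := by
    have h1 : volume.real B ≤ (s + 3) * (2 * r / |t|) :=
      ENNReal.toReal_le_of_le_ofReal (by positivity) hBv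
    have h2 : M * ((s + 3) * (2 * r / |t|)) = 1 / 4 := by
      rw [hr]; field_simp; norm_num
    rw [← h2]; gcongr
  set q := 2 / Real.pi ^ 2 * r ^ 2 with hq
  have hq0 : 0 < q := by positivity
  have hind : Integrable (B.indicator fun _ => M) :=
    (integrable_indicator_iff hBm).mpr (integrableOn_const hBfin)
  have hL : Integrable (fun x => q * (p x - B.indicator (fun _ => M) x
      - 1 / (4 * σ ^ 2) * ((x - a) ^ 2 * p x))) :=
    ((hi.sub hind).sub (hvi.const_mul _)).const_mul q
  have hkey : ∫ x, q * (p x - B.indicator (fun _ => M) x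
      - 1 / (4 * σ ^ 2) * ((x - a) ^ 2 * p x)) ≤ ∫ x, (p x - Real.cos (t * x - θ) * p x) := by
    refine integral_mono_ae hL (hi.sub hci) ?_
    filter_upwards [hM] with x hx
    have hp := hp0 x
    have hcos := Real.cos_le_one (t * x - θ)
    have hR : 0 ≤ p x - Real.cos (t * x - θ) * p x := by nlinarith
    have hnn : 0 ≤ 1 / (4 * σ ^ 2) * ((x - a) ^ 2 * p x) := by positivity
    have hind0 : 0 ≤ B.indicator (fun _ => M) x := Set.indicator_nonneg (fun _ _ => hMpos.le) x
    by_cases hxB : x ∈ B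
    · refine le_trans ?_ hR
      rw [Set.indicator_of_mem hxB]
      exact mul_nonpos_of_nonneg_of_nonpos hq0.le (by linarith)
    by_cases hxa : |x - a| ≤ 2 * σ
    · have := hB x hxB hxa
      calc _ ≤ q * p x := by gcongr; linarith
        _ ≤ (1 - Real.cos (t * x - θ)) * p x := by gcongr
        _ = _ := by ring
    · refine le_trans ?_ hR
      push Not at hxa
      have h1 : (2 * σ) ^ 2 ≤ (x - a) ^ 2 := by rw [← sq_abs (x - a)]; gcongr
      have h2 : p x ≤ 1 / (4 * σ ^ 2) * ((x - a) ^ 2 * p x) := by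
        calc p x = 1 / (4 * σ ^ 2) * ((2 * σ) ^ 2 * p x) := by field_simp; norm_num
          _ ≤ _ := by gcongr
      exact mul_nonpos_of_nonneg_of_nonpos hq0.le (by linarith)
  have hI1 : ∫ x, (p x - Real.cos (t * x - θ) * p x) = 1 - ‖charFn p t‖ := by
    rw [integral_sub hi hci, hp1, hθ]
  have hI2 : ∫ x, q * (p x - B.indicator (fun _ => M) x
      - 1 / (4 * σ ^ 2) * ((x - a) ^ 2 * p x)) = q * (1 - M * volume.real B - 1 / 4) := by
    have hd : Integrable (fun x => p x - B.indicator (fun _ => M) x) := hi.sub hind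
    rw [integral_const_mul, integral_sub hd (hvi.const_mul _), integral_sub hi hind,
      integral_const_mul, hv, hp1, integral_indicator hBm, setIntegral_const, smul_eq_mul]
    field_simp
  rw [hI1, hI2] at hkey
  have h5 : q * (1 / 2) ≤ 1 - ‖charFn p t‖ := by
    refine le_trans ?_ hkey
    gcongr
    linarith
  have h6 : min 1 (σ ^ 2 * t ^ 2) * (s + 3) ^ 2 ≤ 16 * s ^ 2 := by
    have : σ ^ 2 * t ^ 2 = s ^ 2 := by rw [hs, mul_pow, sq_abs]; ring
    rw [this]
    rcases le_total s 1 with h | h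
    · calc _ ≤ s ^ 2 * (s + 3) ^ 2 := by gcongr; exact min_le_right _ _
        _ ≤ s ^ 2 * 4 ^ 2 := by gcongr; linarith
        _ = _ := by ring
    · calc _ ≤ 1 * (s + 3) ^ 2 := by gcongr; exact min_le_left _ _
        _ ≤ 1 * (4 * s) ^ 2 := by gcongr; linarith
        _ = _ := by ring
  have h7 : 1 / (1024 * Real.pi ^ 2) * min 1 (σ ^ 2 * t ^ 2) / (M ^ 2 * σ ^ 2) ≤ q * (1 / 2) := by
    have e : q * (1 / 2) = 1 / (1024 * Real.pi ^ 2) * (16 * s ^ 2 / (s + 3) ^ 2) / (M ^ 2 * σ ^ 2) := by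
      have e1 : |t| = s / σ := by rw [hs]; field_simp
      rw [hq, hr, e1]
      field_simp
      norm_num
    rw [e]
    gcongr
    rwa [le_div_iff₀ (by positivity)]
  linarith
end

section
/- There is an absolute constant c > 0 with the following property. Let X be a random variable with finite variance σ² > 0, having an absolutely continuous distribution with density p and finite entropy, and let f be its characteristic function. Then for all real t, |f(t)| ≤ 1 − c·min{1, σ²t²}·e^{−4·D(X)}. -/
open MeasureTheory

/-- The entropic distance to normality `D(X) = h(Z) - h(X) = log (σ √(2πe)) + ∫ p log p`
for a random variable with density `p` and standard deviation `σ > 0`. -/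
noncomputable def entDist (p : ℝ → ℝ) (σ : ℝ) : ℝ :=
  Real.log (σ * Real.sqrt (2 * Real.pi * Real.exp 1)) + ∫ x, p x * Real.log (p x)

lemma aux_gibbs (p V : ℝ → ℝ) (hp : IsProbDensity p)
    (hlog : Integrable (fun x => p x * Real.log (p x)) volume)
    (hV : Integrable (fun x => p x * V x)) (hq : Integrable (fun x => Real.exp (-V x)))
    (K : ℝ) (hK : 0 < K) (hqK : ∫ x, Real.exp (-V x) ≤ K) :
    -(∫ x, p x * V x) - Real.log K ≤ ∫ x, p x * Real.log (p x) := by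
  obtain ⟨hm, h0, h1⟩ := hp
  have hpi : Integrable p := by
    by_contra h
    rw [integral_undef h] at h1
    norm_num at h1
  have key : ∀ x, -(p x * V x) - Real.log K * p x + p x - K⁻¹ * Real.exp (-V x)
      ≤ p x * Real.log (p x) := by
    intro x
    rcases (h0 x).eq_or_lt with h | h
    · rw [← h]
      have : 0 < K⁻¹ * Real.exp (-V x) := by positivity
      simp; positivity
    · have hh : 0 < K⁻¹ * Real.exp (-V x) / p x := by positivity
      have := Real.log_le_sub_one_of_pos hh
      rw [Real.log_div (by positivity) (by positivity), Real.log_mul (by positivity) (by positivity),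
        Real.log_inv, Real.log_exp] at this
      have h2 := mul_le_mul_of_nonneg_left this h.le
      have h3 : p x * (K⁻¹ * Real.exp (-V x) / p x - 1) = K⁻¹ * Real.exp (-V x) - p x := by
        field_simp
      rw [h3] at h2
      linarith
  have i1 : Integrable (fun x => -(p x * V x) - Real.log K * p x) :=
    hV.neg.sub (hpi.const_mul _)
  have i2 : Integrable (fun x => -(p x * V x) - Real.log K * p x + p x) := i1.add hpi
  have i3 : Integrable (fun x => K⁻¹ * Real.exp (-V x)) := hq.const_mul _
  have := integral_mono (i2.sub i3) hlog key
  rw [integral_sub' i2 i3, integral_add i1 hpi, integral_sub (f := fun x => -(p x * V x)) hV.neg (hpi.const_mul _),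
    integral_neg, integral_const_mul, integral_const_mul, h1] at this
  have h4 : K⁻¹ * ∫ x, Real.exp (-V x) ≤ 1 := by
    rw [inv_mul_le_iff₀ hK]; linarith
  linarith

lemma aux_half_int (w : ℝ → ℝ) (σ : ℝ) (hσ : 0 < σ) (hw : Continuous w)
    (h0 : ∀ x, 0 ≤ w x) (h1 : ∀ x, w x ≤ 1) :
    IntegrableOn (fun y => Real.exp (-(y / σ)) * w y) (Set.Ioi 0) := by
  have hb : IntegrableOn (fun y => Real.exp (-(1/σ) * y)) (Set.Ioi 0) :=
    exp_neg_integrableOn_Ioi 0 (by positivity)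
  refine Integrable.mono' hb ?_ ?_
  · exact (by fun_prop : Continuous fun y => Real.exp (-(y / σ)) * w y).aestronglyMeasurable
  · refine Filter.Eventually.of_forall fun y => ?_
    rw [Real.norm_of_nonneg (mul_nonneg (Real.exp_pos _).le (h0 y))]
    have : -(1/σ) * y = -(y/σ) := by ring
    rw [this]
    exact mul_le_of_le_one_right (Real.exp_pos _).le (h1 y)

lemma aux_half (w : ℝ → ℝ) (σ T J : ℝ) (hσ : 0 < σ) (hT : 0 < T) (hw : Continuous w)
    (h0 : ∀ x, 0 ≤ w x) (h1 : ∀ x, w x ≤ 1) (hper : Function.Periodic w T)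
    (hJ : ∫ x in (0:ℝ)..T, w x ≤ J) :
    ∫ y in Set.Ioi 0, Real.exp (-(y / σ)) * w y ≤ J * (1 + σ / T) := by
  set g : ℝ → ℝ := fun y => Real.exp (-(y / σ)) * w y with hg
  have hgc : Continuous g := by fun_prop
  have hi := aux_half_int w σ hσ hw h0 h1
  set A := ∫ y in Set.Ioi 0, g y with hA
  have hA0 : 0 ≤ A := integral_nonneg fun y => mul_nonneg (Real.exp_pos _).le (h0 y)
  have e1 : A = (∫ y in (0:ℝ)..T, g y) + ∫ y in Set.Ioi T, g y := by
    have := intervalIntegral.integral_interval_add_Ioi (f := g) (a := 0) (b := T) (μ := volume) hi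
      (hi.mono_set (Set.Ioi_subset_Ioi hT.le))
    exact this.symm
  have e2 : ∫ y in Set.Ioi T, g y = Real.exp (-(T/σ)) * A := by
    have h := (measurePreserving_add_right volume T).setIntegral_preimage_emb
      (measurableEmbedding_addRight T) g (Set.Ioi T)
    have hpre : (fun x : ℝ => x + T) ⁻¹' Set.Ioi T = Set.Ioi 0 := by
      ext x; simp
    rw [hpre] at h
    rw [← h, hA, ← integral_const_mul]
    congr 1
    ext y
    simp only [hg]
    rw [hper y, ← mul_assoc, ← Real.exp_add]
    congr 2
    ring
  have e3 : ∫ y in (0:ℝ)..T, g y ≤ J := by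
    refine le_trans ?_ hJ
    refine intervalIntegral.integral_mono_on hT.le (hgc.intervalIntegrable _ _)
      (hw.intervalIntegrable _ _) ?_
    intro y hy
    refine mul_le_of_le_one_left (h0 y) ?_
    rw [Real.exp_le_one_iff]
    have : 0 ≤ y / σ := div_nonneg hy.1 hσ.le
    linarith
  have e4 : A * (1 - Real.exp (-(T/σ))) ≤ J := by
    rw [e2] at e1; nlinarith
  have e5 : Real.exp (-(T/σ)) ≤ (1 + T/σ)⁻¹ := by
    rw [Real.exp_neg]
    apply inv_anti₀ (by positivity)
    linarith [Real.add_one_le_exp (T/σ)]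
  have e6 : A * (1 - (1 + T/σ)⁻¹) ≤ J := by
    refine le_trans ?_ e4
    gcongr
  have e7 : A * (1 - (1 + T/σ)⁻¹) * (1 + σ/T) = A := by
    field_simp
    ring
  rw [← e7]
  gcongr

lemma aux_full (w : ℝ → ℝ) (a σ T J : ℝ) (hσ : 0 < σ) (hT : 0 < T) (hw : Continuous w)
    (h0 : ∀ x, 0 ≤ w x) (h1 : ∀ x, w x ≤ 1) (hper : Function.Periodic w T)
    (hJ : ∀ b, ∫ x in b..(b + T), w x ≤ J) :
    Integrable (fun x => Real.exp (-(|x - a| / σ)) * w x) ∧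
    ∫ x, Real.exp (-(|x - a| / σ)) * w x ≤ 2 * (J * (1 + σ / T)) := by
  set g : ℝ → ℝ := fun y => Real.exp (-(|y| / σ)) * w (y + a) with hg
  have c1 : Continuous fun y => w (y + a) := by fun_prop
  have c2 : Continuous fun y => w (-y + a) := by fun_prop
  have p1 : Function.Periodic (fun y => w (y + a)) T := by
    intro y; simp only; rw [← hper (y + a)]; congr 1; ring
  have p2 : Function.Periodic (fun y => w (-y + a)) T := by
    intro y; simp only; rw [← hper (-(y+T) + a)]; congr 1; ring
  have j1 : ∫ x in (0:ℝ)..T, w (x + a) ≤ J := by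
    rw [intervalIntegral.integral_comp_add_right]
    have := hJ a
    rwa [zero_add, add_comm T a]
  have j2 : ∫ x in (0:ℝ)..T, w (-x + a) ≤ J := by
    have h : ∫ x in (0:ℝ)..T, w (-x + a) = ∫ x in (0:ℝ)..T, w (a - x) := by
      congr 1; ext x; congr 1; ring
    rw [h, intervalIntegral.integral_comp_sub_left]
    have := hJ (a - T)
    rw [sub_add_cancel] at this
    rwa [sub_zero]
  have i1 := aux_half_int _ σ hσ c1 (fun x => h0 _) (fun x => h1 _)
  have i2 := aux_half_int _ σ hσ c2 (fun x => h0 _) (fun x => h1 _)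
  have b1 := aux_half _ σ T J hσ hT c1 (fun x => h0 _) (fun x => h1 _) p1 j1
  have b2 := aux_half _ σ T J hσ hT c2 (fun x => h0 _) (fun x => h1 _) p2 j2
  have g1 : IntegrableOn g (Set.Ioi 0) := by
    refine i1.congr_fun ?_ measurableSet_Ioi
    intro y hy
    simp only [hg]
    rw [abs_of_pos hy]
  have g2 : IntegrableOn (fun y => g (-y)) (Set.Ioi 0) := by
    refine i2.congr_fun ?_ measurableSet_Ioi
    intro y hy
    simp only [hg]
    rw [abs_neg, abs_of_pos hy]
  have v1 : ∫ y in Set.Ioi 0, g y ≤ J * (1 + σ / T) := by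
    refine le_trans (le_of_eq ?_) b1
    refine setIntegral_congr_fun measurableSet_Ioi ?_
    intro y hy
    simp only [hg]
    rw [abs_of_pos hy]
  have v2 : ∫ y in Set.Ioi 0, g (-y) ≤ J * (1 + σ / T) := by
    refine le_trans (le_of_eq ?_) b2
    refine setIntegral_congr_fun measurableSet_Ioi ?_
    intro y hy
    simp only [hg]
    rw [abs_neg, abs_of_pos hy]
  have g3 : IntegrableOn g (Set.Iic 0) := by
    have h := (Measure.measurePreserving_neg (volume : Measure ℝ)).integrableOn_comp_preimage
      (Homeomorph.neg ℝ).measurableEmbedding (f := g) (s := Set.Iio 0)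
    have hpre : (Neg.neg : ℝ → ℝ) ⁻¹' Set.Iio 0 = Set.Ioi 0 := by
      ext x; simp
    rw [hpre] at h
    rw [integrableOn_Iic_iff_integrableOn_Iio]
    exact h.1 g2
  have gi : Integrable g := by
    rw [← integrableOn_univ, ← Set.Iic_union_Ioi (a := (0:ℝ))]
    exact g3.union g1
  have v3 : ∫ y in Set.Iic 0, g y ≤ J * (1 + σ / T) := by
    rw [integral_comp_neg_Ioi] at v2
    simpa using v2
  have tot : ∫ y, g y ≤ 2 * (J * (1 + σ / T)) := by
    rw [← intervalIntegral.integral_Iic_add_Ioi g3 g1]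
    linarith
  have hge : (fun x => Real.exp (-(|x - a| / σ)) * w x) = fun x => g (x - a) := by
    ext x; simp [hg]
  rw [hge]
  exact ⟨gi.comp_sub_right a, by rw [integral_sub_right_eq_self g a]; exact tot⟩

lemma aux_J (t θ β : ℝ) (ht : 0 < t) (hβ : 0 < β) (b : ℝ) :
    ∫ x in b..(b + 2 * Real.pi / t), Real.exp (-(β * Real.sin ((t * x - θ) / 2) ^ 2))
      ≤ Real.pi / t * Real.sqrt (Real.pi / β) := by
  set v : ℝ → ℝ := fun u => Real.exp (-(β * Real.sin u ^ 2)) with hv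
  have hper : Function.Periodic v Real.pi := by
    intro u; simp [hv, Real.sin_add_pi]
  have hvc : Continuous v := by fun_prop
  have e0 : ∀ x, Real.exp (-(β * Real.sin ((t * x - θ) / 2) ^ 2)) = v (t / 2 * x - θ / 2) := by
    intro x; simp only [hv]; congr 5; ring
  simp only [e0]
  rw [intervalIntegral.integral_comp_mul_sub v (by positivity : t / 2 ≠ 0)]
  have e1 : t / 2 * (b + 2 * Real.pi / t) - θ / 2 = (t / 2 * b - θ / 2) + Real.pi := by
    field_simp; ring
  rw [e1, hper.intervalIntegral_add_eq _ (-(Real.pi / 2))]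
  have hG : Integrable (fun u : ℝ => Real.exp (-(4 * β / Real.pi ^ 2) * u ^ 2)) :=
    integrable_exp_neg_mul_sq (by positivity)
  have e2 : ∫ u in (-(Real.pi / 2))..(-(Real.pi / 2) + Real.pi), v u
      ≤ ∫ u : ℝ, Real.exp (-(4 * β / Real.pi ^ 2) * u ^ 2) := by
    have hle : -(Real.pi / 2) ≤ -(Real.pi / 2) + Real.pi := by linarith [Real.pi_pos]
    refine le_trans (intervalIntegral.integral_mono_on hle (hvc.intervalIntegrable _ _)
      (hG.intervalIntegrable) ?_) ?_
    · intro u hu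
      simp only [hv]
      rw [Real.exp_le_exp]
      have hj := Real.mul_abs_le_abs_sin (x := u) (abs_le.2 ⟨by linarith [hu.1], by linarith [hu.2]⟩)
      have hj2 : (2 / Real.pi * |u|) ^ 2 ≤ |Real.sin u| ^ 2 := by gcongr
      rw [sq_abs, mul_pow, sq_abs] at hj2
      have := mul_le_mul_of_nonneg_left hj2 hβ.le
      have e : β * ((2 / Real.pi) ^ 2 * u ^ 2) = 4 * β / Real.pi ^ 2 * u ^ 2 := by
        field_simp; ring
      linarith
    · rw [intervalIntegral.integral_of_le hle]
      exact setIntegral_le_integral hG (Filter.Eventually.of_forall fun u => (Real.exp_pos _).le)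
  rw [integral_gaussian] at e2
  have e3 : Real.sqrt (Real.pi / (4 * β / Real.pi ^ 2)) = Real.pi / 2 * Real.sqrt (Real.pi / β) := by
    rw [← Real.sqrt_sq (by positivity : 0 ≤ Real.pi / 2), ← Real.sqrt_mul (by positivity)]
    congr 1
    field_simp
    try ring
  rw [e3] at e2
  rw [smul_eq_mul]
  calc _ ≤ (t/2)⁻¹ * (Real.pi / 2 * Real.sqrt (Real.pi / β)) := by gcongr
    _ = _ := by field_simp

lemma aux_charFn (p : ℝ → ℝ) (hp : IsProbDensity p) (t : ℝ) :
    ∃ θ : ℝ, Integrable (fun x => p x * Real.sin ((t * x - θ) / 2) ^ 2) ∧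
      ∫ x, p x * Real.sin ((t * x - θ) / 2) ^ 2 = (1 - ‖charFn p t‖) / 2 := by
  obtain ⟨hm, h0, h1⟩ := hp
  have hpi : Integrable p := by
    by_contra h
    rw [integral_undef h] at h1
    norm_num at h1
  set θ := (charFn p t).arg with hθ
  refine ⟨θ, ?_, ?_⟩
  · refine Integrable.mono' hpi ?_ ?_
    · exact (by fun_prop : Measurable fun x => p x * Real.sin ((t * x - θ) / 2) ^ 2).aestronglyMeasurable
    · refine Filter.Eventually.of_forall fun x => ?_
      rw [Real.norm_of_nonneg (mul_nonneg (h0 x) (sq_nonneg _))]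
      exact mul_le_of_le_one_right (h0 x) (Real.sin_sq_le_one _)
  · have hci : Integrable (fun x => Real.cos (t * x - θ) * p x) := by
      refine Integrable.mono' hpi ?_ ?_
      · exact (by fun_prop : Measurable fun x => Real.cos (t * x - θ) * p x).aestronglyMeasurable
      · refine Filter.Eventually.of_forall fun x => ?_
        rw [norm_mul, Real.norm_of_nonneg (h0 x)]
        exact mul_le_of_le_one_left (h0 x) (Real.abs_cos_le_one _)
    have hn : ‖charFn p t‖ = ∫ x, Real.cos (t * x - θ) * p x := by
      have e1 : (‖charFn p t‖ : ℂ) = Complex.exp (-(θ * Complex.I)) * charFn p t := by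
        conv_rhs => rw [← Complex.norm_mul_exp_arg_mul_I (charFn p t)]
        rw [← hθ, mul_left_comm, ← Complex.exp_add]
        simp
      have e2 : (‖charFn p t‖ : ℂ) = ∫ x : ℝ, Complex.exp (((t * x - θ : ℝ) : ℂ) * Complex.I) * (p x : ℂ) := by
        rw [e1, charFn, ← integral_const_mul]
        congr 1
        ext x
        rw [← mul_assoc, ← Complex.exp_add]
        congr 2
        push_cast
        ring
      have hi : Integrable (fun x : ℝ => Complex.exp (((t * x - θ : ℝ) : ℂ) * Complex.I) * (p x : ℂ)) := by
        refine Integrable.mono' hpi ?_ ?_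
        · exact (by fun_prop : Measurable fun x : ℝ => Complex.exp (((t * x - θ : ℝ) : ℂ) * Complex.I) * (p x : ℂ)).aestronglyMeasurable
        · refine Filter.Eventually.of_forall fun x => ?_
          rw [norm_mul, Complex.norm_exp_ofReal_mul_I, one_mul, Complex.norm_real, Real.norm_of_nonneg (h0 x)]
      have e3 := congrArg Complex.re e2
      rw [Complex.ofReal_re] at e3
      rw [e3]
      have e4 := Complex.reCLM.integral_comp_comm hi
      simp only [Complex.reCLM_apply] at e4
      rw [← e4]
      congr 1
      ext x
      rw [Complex.re_mul_ofReal, Complex.exp_ofReal_mul_I_re]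
    have e : ∀ x, p x * Real.sin ((t * x - θ) / 2) ^ 2 = (p x - Real.cos (t * x - θ) * p x) / 2 := by
      intro x
      rw [Real.sin_sq_eq_half_sub, mul_div_cancel₀ _ (two_ne_zero)]
      ring
    simp only [e]
    rw [integral_div, integral_sub hpi hci, h1, hn]

lemma aux_abs (p : ℝ → ℝ) (a σ : ℝ) (hp : IsProbDensity p) (hσ : 0 < σ)
    (hv : ∫ x, (x - a) ^ 2 * p x = σ ^ 2) :
    Integrable (fun x => p x * (|x - a| / σ)) ∧ ∫ x, p x * (|x - a| / σ) ≤ 1 := by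
  obtain ⟨hm, h0, h1⟩ := hp
  have hpi : Integrable p := by
    by_contra h
    rw [integral_undef h] at h1
    norm_num at h1
  have hvi : Integrable (fun x => (x - a) ^ 2 * p x) := by
    by_contra h
    rw [integral_undef h] at hv
    have : 0 < σ ^ 2 := by positivity
    linarith
  have hB : Integrable (fun x => (p x + (σ^2)⁻¹ * ((x - a) ^ 2 * p x)) / 2) :=
    (hpi.add (hvi.const_mul _)).div_const _
  have hle : ∀ x, p x * (|x - a| / σ) ≤ (p x + (σ^2)⁻¹ * ((x - a) ^ 2 * p x)) / 2 := by
    intro x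
    have e : (p x + (σ^2)⁻¹ * ((x - a) ^ 2 * p x)) / 2 = p x * ((1 + (|x - a| / σ)^2) / 2) := by
      rw [div_pow, sq_abs]; field_simp
    rw [e]
    apply mul_le_mul_of_nonneg_left _ (h0 x)
    nlinarith [sq_nonneg (|x - a| / σ - 1)]
  have hi : Integrable (fun x => p x * (|x - a| / σ)) := by
    refine Integrable.mono' hB ?_ ?_
    · exact (by fun_prop : Measurable fun x => p x * (|x - a| / σ)).aestronglyMeasurable
    · refine Filter.Eventually.of_forall fun x => ?_
      rw [Real.norm_of_nonneg (mul_nonneg (h0 x) (by positivity))]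
      exact hle x
  refine ⟨hi, (integral_mono hi hB hle).trans ?_⟩
  rw [integral_div, integral_add hpi (hvi.const_mul _), integral_const_mul, h1, hv]
  rw [inv_mul_cancel₀ (by positivity)]
  norm_num

/-- From a lower bound on the negative entropy to an upper bound on `exp (-2 D)`. -/
lemma aux_exp (p : ℝ → ℝ) (σ m K : ℝ) (hσ : 0 < σ) (hK : 0 < K)
    (h : -m - Real.log K ≤ ∫ x, p x * Real.log (p x)) :
    Real.exp (-2 * entDist p σ) ≤ K ^ 2 * Real.exp (2 * m) / σ ^ 2 := by
  have hc : 1 ≤ Real.sqrt (2 * Real.pi * Real.exp 1) := by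
    rw [Real.one_le_sqrt]
    nlinarith [Real.pi_gt_three, Real.add_one_le_exp 1]
  have hl : Real.log σ ≤ Real.log (σ * Real.sqrt (2 * Real.pi * Real.exp 1)) := by
    apply Real.log_le_log hσ
    nlinarith
  have : -2 * entDist p σ ≤ 2 * Real.log K + 2 * m - 2 * Real.log σ := by
    unfold entDist; linarith
  refine (Real.exp_le_exp.2 this).trans (le_of_eq ?_)
  have e : ∀ y : ℝ, 0 < y → Real.exp (2 * Real.log y) = y ^ 2 := by
    intro y hy
    rw [two_mul, Real.exp_add, Real.exp_log hy, sq]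
  rw [Real.exp_sub, Real.exp_add, e K hK, e σ hσ]

lemma aux_main (p : ℝ → ℝ) (a σ t θ ε : ℝ) (hp : IsProbDensity p) (hσ : 0 < σ)
    (hv : ∫ x, (x - a) ^ 2 * p x = σ ^ 2)
    (hlog : Integrable (fun x => p x * Real.log (p x)) volume) (ht : 0 < t) (hε : 0 < ε)
    (hi : Integrable (fun x => p x * Real.sin ((t * x - θ) / 2) ^ 2))
    (hs : ∫ x, p x * Real.sin ((t * x - θ) / 2) ^ 2 ≤ ε) :
    min 1 (σ ^ 2 * t ^ 2) * Real.exp (-2 * entDist p σ)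
      ≤ Real.pi * (1 + 2 * Real.pi) ^ 2 * Real.exp 4 * ε := by
  obtain ⟨ha, ha1⟩ := aux_abs p a σ hp hσ hv
  set w : ℝ → ℝ := fun x => Real.exp (-(ε⁻¹ * Real.sin ((t * x - θ) / 2) ^ 2)) with hw
  have hT : 0 < 2 * Real.pi / t := by positivity
  have hper : Function.Periodic w (2 * Real.pi / t) := by
    intro x
    have : (t * (x + 2 * Real.pi / t) - θ) / 2 = (t * x - θ) / 2 + Real.pi := by
      field_simp; ring
    simp only [hw]
    rw [this, Real.sin_add_pi, neg_sq]
  obtain ⟨q1, q2⟩ := aux_full w a σ (2 * Real.pi / t) _ hσ hT (by fun_prop)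
    (fun x => (Real.exp_pos _).le)
    (fun x => by rw [Real.exp_le_one_iff, neg_nonpos]; positivity) hper
    (aux_J t θ ε⁻¹ ht (by positivity))
  set V : ℝ → ℝ := fun x => |x - a| / σ + ε⁻¹ * Real.sin ((t * x - θ) / 2) ^ 2 with hV
  have eV : (fun x => Real.exp (-(|x - a| / σ)) * w x) = fun x => Real.exp (-V x) := by
    ext x; simp only [hw, hV]; rw [← Real.exp_add]; congr 1; ring
  rw [eV] at q1 q2
  set K := 2 * (Real.pi / t * Real.sqrt (Real.pi / ε⁻¹) * (1 + σ / (2 * Real.pi / t))) with hKd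
  have hK : 0 < K := by positivity
  have epV : (fun x => p x * V x) = fun x => p x * (|x - a| / σ) + ε⁻¹ * (p x * Real.sin ((t * x - θ) / 2) ^ 2) := by
    ext x; simp only [hV]; ring
  have hpV : Integrable (fun x => p x * V x) := by
    rw [epV]; exact ha.add (hi.const_mul _)
  have hg := aux_gibbs p V hp hlog hpV q1 K hK q2
  have hm : ∫ x, p x * V x ≤ 2 := by
    rw [epV, integral_add ha (hi.const_mul _), integral_const_mul]
    have : ε⁻¹ * ∫ x, p x * Real.sin ((t * x - θ) / 2) ^ 2 ≤ 1 := by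
      rw [inv_mul_le_iff₀ hε]; linarith
    linarith
  have hE := aux_exp p σ 2 K hσ hK (by linarith)
  have hK2 : K ^ 2 * Real.exp (2 * 2) / σ ^ 2
      = (1 + 2 * Real.pi / (σ * t)) ^ 2 * (Real.pi * Real.exp 4 * ε) := by
    have h1 : K = Real.sqrt (Real.pi * ε) * (2 * Real.pi / t + σ) := by
      rw [hKd, div_inv_eq_mul]; field_simp
    rw [h1, mul_pow, Real.sq_sqrt (by positivity)]
    norm_num
    field_simp
    try ring
  rw [hK2] at hE
  have hs0 : 0 < σ * t := by positivity
  have hmin : min 1 (σ ^ 2 * t ^ 2) * (1 + 2 * Real.pi / (σ * t)) ^ 2 ≤ (1 + 2 * Real.pi) ^ 2 := by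
    rw [← mul_pow]
    have hπ := Real.pi_pos
    generalize σ * t = s at hs0
    rcases le_total 1 s with h | h
    · calc _ ≤ 1 * (1 + 2 * Real.pi / s) ^ 2 := by gcongr; exact min_le_left _ _
        _ ≤ _ := by
          rw [one_mul]; gcongr
          exact div_le_self (by positivity) h
    · calc _ ≤ s ^ 2 * (1 + 2 * Real.pi / s) ^ 2 := by gcongr; exact min_le_right _ _
        _ = (s + 2 * Real.pi) ^ 2 := by field_simp
        _ ≤ _ := by gcongr
  have hmin0 : 0 ≤ min 1 (σ ^ 2 * t ^ 2) := by positivity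
  calc _ ≤ min 1 (σ ^ 2 * t ^ 2) * ((1 + 2 * Real.pi / (σ * t)) ^ 2 * (Real.pi * Real.exp 4 * ε)) := by gcongr
    _ = (min 1 (σ ^ 2 * t ^ 2) * (1 + 2 * Real.pi / (σ * t)) ^ 2) * (Real.pi * Real.exp 4 * ε) := by ring
    _ ≤ (1 + 2 * Real.pi) ^ 2 * (Real.pi * Real.exp 4 * ε) := by gcongr
    _ = _ := by ring

lemma aux_D (p : ℝ → ℝ) (a σ : ℝ) (hp : IsProbDensity p) (hσ : 0 < σ)
    (hv : ∫ x, (x - a) ^ 2 * p x = σ ^ 2)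
    (hlog : Integrable (fun x => p x * Real.log (p x)) volume) :
    Real.exp (-2 * entDist p σ) ≤ 16 * Real.exp 2 := by
  obtain ⟨ha, ha1⟩ := aux_abs p a σ hp hσ hv
  obtain ⟨q1, q2⟩ := aux_full (fun _ => 1) a σ σ σ hσ hσ (by fun_prop)
    (fun x => zero_le_one) (fun x => le_rfl) (fun x => rfl) (fun b => by simp)
  simp only [mul_one] at q1 q2
  have e : 2 * (σ * (1 + σ / σ)) = 4 * σ := by field_simp; ring
  rw [e] at q2
  have hg := aux_gibbs p (fun x => |x - a| / σ) hp hlog ha q1 (4 * σ) (by positivity) q2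
  have hE := aux_exp p σ 1 (4 * σ) hσ (by positivity) (by linarith)
  refine hE.trans (le_of_eq ?_)
  norm_num
  field_simp
  norm_num

/-- Proposition 6.2: there is an absolute constant `c > 0` such that for any random
variable `X` with finite variance `σ² > 0`, absolutely continuous distribution with
density `p` and finite entropy, the characteristic function `f` of `X` satisfies
`|f(t)| ≤ 1 - c·min{1, σ²t²}·e^{-4 D(X)}` for all real `t`. -/
theorem charFn_bound_of_finite_entropy :
    ∃ c : ℝ, 0 < c ∧
      ∀ (p : ℝ → ℝ) (a σ : ℝ),
        IsProbDensity p →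
        (∫ x, x * p x = a) →
        0 < σ →
        (∫ x, (x - a) ^ 2 * p x = σ ^ 2) →
        Integrable (fun x => p x * Real.log (p x)) volume →
        ∀ t : ℝ, ‖charFn p t‖ ≤
          1 - c * min 1 (σ ^ 2 * t ^ 2) * Real.exp (-4 * entDist p σ) := by
  set C := Real.pi * (1 + 2 * Real.pi) ^ 2 * Real.exp 4 with hC
  set M := 16 * Real.exp 2 with hM
  have hC0 : 0 < C := by positivity
  have hM0 : 0 < M := by positivity
  refine ⟨(2 * C * M)⁻¹, by positivity, ?_⟩
  intro p a σ hp _ hσ hv hlog t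
  obtain ⟨θ, hi, hs⟩ := aux_charFn p hp t
  have hnn : 0 ≤ ∫ x, p x * Real.sin ((t * x - θ) / 2) ^ 2 :=
    integral_nonneg fun x => mul_nonneg (hp.2.1 x) (sq_nonneg _)
  rcases eq_or_ne t 0 with rfl | ht
  · simp only [ne_eq, OfNat.ofNat_ne_zero, not_false_eq_true, zero_pow, mul_zero]
    rw [min_eq_right zero_le_one]
    linarith
  by_contra hcon
  rw [not_le] at hcon
  set E := Real.exp (-2 * entDist p σ) with hE
  have hE4 : Real.exp (-4 * entDist p σ) = E * E := by
    rw [hE, ← Real.exp_add]; congr 1; ring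
  have hE0 : 0 < E := Real.exp_pos _
  rw [hE4] at hcon
  set δ := min 1 (σ ^ 2 * t ^ 2) with hδ
  have hδ0 : 0 < δ := by positivity
  set ε := (2 * C * M)⁻¹ * δ * (E * E) with hε
  have hε0 : 0 < ε := by positivity
  have hsε : ∫ x, p x * Real.sin ((t * x - θ) / 2) ^ 2 ≤ ε := by linarith
  have key : δ * E ≤ C * ε := by
    rcases lt_or_gt_of_ne ht with h | h
    · have hsw : ∀ x, Real.sin ((t * x - θ) / 2) ^ 2 = Real.sin ((-t * x - -θ) / 2) ^ 2 := by
        intro x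
        rw [← neg_sq, ← Real.sin_neg]; congr 2; ring
      simp only [hsw] at hi hsε
      have := aux_main p a σ (-t) (-θ) ε hp hσ hv hlog (by linarith) hε0 hi hsε
      rwa [neg_sq] at this
    · exact aux_main p a σ t θ ε hp hσ hv hlog h hε0 hi hsε
  have hD : E ≤ M := aux_D p a σ hp hσ hv hlog
  have e1 : C * ε = δ * E * (E / (2 * M)) := by
    rw [hε]; field_simp
  have e2 : E / (2 * M) ≤ 1 / 2 := by
    rw [div_le_iff₀ (by positivity)]; linarith
  have : δ * E * (E / (2 * M)) ≤ δ * E * (1 / 2) := by gcongr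
  have : 0 < δ * E := by positivity
  linarith
end
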